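/- Let n ≥ 3 be an integer, φ₀ > 0, a = φ₀^{-2(n-1)}, and let φ : I → ℝ be a smooth positive function on an open interval I containing 0 satisfying φ''(s) = (n-1)(1+φ'(s)²)/φ(s), φ(0) = φ₀, φ'(0) = 0. Define the radial Laplacian of a twice-differentiable function f : I → ℝ by Δf(s) = (1+φ'(s)²)^{-1/2}·φ(s)^{1-n}·d/ds[(1+φ'(s)²)^{-1/2}·φ(s)^{n-1}·f'(s)], and set ψ(s) = (n(n-1))^{1/2}·φ₀^{n-1}·φ(s)^{-n}. Then for all s ∈ I: ψ(s)·Δψ(s) + ψ(s)⁴ = (2/n)·(1+φ'(s)²)^{-1}·ψ'(s)². -/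

import Mathlib

/-!
The catenoid ODE has the first integral `1 + φ'² = (φ/φ₀)^(2(n-1))`
(`catenoid_first_integral`). Hence the weight `(1+φ'²)^(-1/2)·φ^(n-1)` inside the radial Laplacian
is the constant `φ₀^(n-1)`, so that `Δψ = (1+φ'²)⁻¹·ψ''`. With `ψ = C·φ^(-n)` and
`C² = n(n-1)·φ₀^(2(n-1))`, the ODE expresses `ψ''` through `φ` and `φ'`, and the first integral gives
`C²·φ^(-2(n-1)) = n(n-1)/(1+φ'²)`; the identity is then algebraic.
-/

/-- The Laplace–Beltrami operator of the catenoid metric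
`g = (1+φ'²)ds² + φ²·g_{S^{n-1}}` acting on rotationally symmetric functions `f = f(s)`:
`Δf = (1+φ'²)^(-1/2)·φ^(1-n)·((1+φ'²)^(-1/2)·φ^(n-1)·f')'`. -/
noncomputable def radialLaplacian (n : ℕ) (φ : ℝ → ℝ) (f : ℝ → ℝ) : ℝ → ℝ :=
  fun s =>
    (1 + (deriv φ s) ^ 2) ^ (-(1 / 2 : ℝ)) * (φ s) ^ ((1 : ℤ) - n) *
      deriv (fun t =>
        (1 + (deriv φ t) ^ 2) ^ (-(1 / 2 : ℝ)) * (φ t) ^ ((n : ℤ) - 1) * deriv f t) s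

/-- The conserved quantity of the catenoid ODE: `(1 + φ'²)·φ^(-2m)` is constant, with value
`φ₀^(-2m)` read off at `s = 0`. Here `m = n - 1`, and the conclusion is stated without division. -/
theorem catenoid_first_integral (m : ℕ) (φ₀ : ℝ) (hφ₀ : 0 < φ₀)
    (I : Set ℝ) (hIopen : IsOpen I) (hIconv : Convex ℝ I) (h0I : (0 : ℝ) ∈ I)
    (φ : ℝ → ℝ) (hpos : ∀ s ∈ I, 0 < φ s)
    (hd1 : ∀ s ∈ I, HasDerivAt φ (deriv φ s) s)
    (hd2 : ∀ s ∈ I, HasDerivAt (deriv φ) ((m : ℝ) * (1 + (deriv φ s) ^ 2) / φ s) s)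
    (hinit : φ 0 = φ₀) (hinit' : deriv φ 0 = 0) :
    ∀ s ∈ I, (1 + (deriv φ s) ^ 2) * (φ₀ ^ m) ^ 2 = (φ s ^ m) ^ 2 := by
  have hder : ∀ s ∈ I, HasDerivAt
      (fun t => (1 + (deriv φ t) ^ 2) * φ t ^ (-(2 * m : ℤ))) 0 s := by
    intro s hs
    have hx := (hpos s hs).ne'
    have h1 := (((hd2 s hs).pow 2).const_add 1).mul
      ((hasDerivAt_zpow (-(2 * m : ℤ)) (φ s) (Or.inl hx)).comp s (hd1 s hs))
    refine h1.congr_deriv ?_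
    simp only [Function.comp, Pi.pow_apply]
    rw [zpow_sub_one₀ hx]
    push_cast
    field_simp
    ring
  intro s hs
  have hconst := hIopen.is_const_of_deriv_eq_zero hIconv.isPreconnected
    (fun t ht => (hder t ht).differentiableAt.differentiableWithinAt)
    (fun t ht => (hder t ht).deriv) hs h0I
  have hx := (hpos s hs).ne'
  simp only [hinit, hinit', zpow_neg] at hconst
  have e : ∀ x : ℝ, x ^ (2 * m : ℤ) = (x ^ m) ^ 2 := by
    intro x
    rw [← pow_mul, mul_comm m 2]
    exact_mod_cast zpow_natCast x (2 * m)
  rw [e, e] at hconst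
  field_simp at hconst
  linarith

/-- **Simons' identity on the catenoid.**
Let `φ` be a smooth positive solution of the catenoid ODE on an open interval `I`
containing `0` with `φ 0 = φ₀ > 0`, `φ' 0 = 0`, and set
`ψ = (n(n-1))^(1/2)·φ₀^(n-1)·φ^(-n)` (the norm `|A|` of the second fundamental form).
Then `ψ·Δψ + ψ⁴ = (2/n)·(1+φ'²)⁻¹·ψ'²` on `I`, i.e. Simons' inequality
`|A|Δ|A| + |A|⁴ ≥ (2/n)|∇|A||²` holds with equality. -/
theorem catenoid_simons_equality
    (n : ℕ) (hn : 3 ≤ n) (φ₀ : ℝ) (hφ₀ : 0 < φ₀)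
    (a : ℝ) (ha : a = φ₀ ^ (-(2 * ((n : ℤ) - 1))))
    (I : Set ℝ) (hIopen : IsOpen I) (hIconv : Convex ℝ I) (h0I : (0 : ℝ) ∈ I)
    (φ : ℝ → ℝ)
    (hsmooth : ContDiffOn ℝ (⊤ : ℕ∞) φ I)
    (hpos : ∀ s ∈ I, 0 < φ s)
    (hode : ∀ s ∈ I, deriv (deriv φ) s = ((n : ℝ) - 1) * (1 + (deriv φ s) ^ 2) / φ s)
    (hinit : φ 0 = φ₀) (hinit' : deriv φ 0 = 0)
    (ψ : ℝ → ℝ)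
    (hψ : ψ = fun s => Real.sqrt ((n : ℝ) * ((n : ℝ) - 1)) * φ₀ ^ (n - 1) * (φ s) ^ (-(n : ℤ))) :
    ∀ s ∈ I,
      ψ s * radialLaplacian n φ ψ s + (ψ s) ^ 4
        = (2 / (n : ℝ)) * (1 + (deriv φ s) ^ 2)⁻¹ * (deriv ψ s) ^ 2 := by
  obtain ⟨m, rfl⟩ : ∃ m, n = m + 1 := ⟨n - 1, by omega⟩
  have hd1 : ∀ s ∈ I, HasDerivAt φ (deriv φ s) s := fun s hs =>
    ((hsmooth.contDiffAt (hIopen.mem_nhds hs)).differentiableAt (by simp)).hasDerivAt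
  have hd2 : ∀ s ∈ I, HasDerivAt (deriv φ) ((m : ℝ) * (1 + (deriv φ s) ^ 2) / φ s) s := by
    intro s hs
    have h1 : ContDiffOn ℝ 1 (deriv φ) I :=
      hsmooth.deriv_of_isOpen hIopen (WithTop.coe_le_coe.2 (le_top : (1 + 1 : ℕ∞) ≤ ⊤))
    have h2 := ((h1.contDiffAt (hIopen.mem_nhds hs)).differentiableAt (by simp)).hasDerivAt
    rw [hode s hs] at h2
    simpa using h2
  have hfi := catenoid_first_integral m φ₀ hφ₀ I hIopen hIconv h0I φ hpos hd1 hd2 hinit hinit'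
  -- The first integral in the form in which it enters the Laplacian.
  have hroot : ∀ s ∈ I, (1 + (deriv φ s) ^ 2) ^ (-(1 / 2 : ℝ)) = φ₀ ^ m / φ s ^ m := by
    intro s hs
    have hx := hpos s hs
    have hw : 1 + (deriv φ s) ^ 2 = (φ s ^ m / φ₀ ^ m) ^ 2 := by
      rw [div_pow, eq_div_iff (by positivity)]
      exact hfi s hs
    rw [hw, Real.rpow_neg (by positivity), ← Real.sqrt_eq_rpow, Real.sqrt_sq (by positivity),
      inv_div]
  set C : ℝ := Real.sqrt (((m + 1 : ℕ) : ℝ) * (((m + 1 : ℕ) : ℝ) - 1)) * φ₀ ^ (m + 1 - 1) with hC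
  have hC2 : C ^ 2 = ((m : ℝ) + 1) * m * (φ₀ ^ m) ^ 2 := by
    rw [hC, mul_pow, Real.sq_sqrt]
    · push_cast
      simp
    · push_cast
      simp only [add_sub_cancel_right]
      positivity
  have hψ1 : ∀ s ∈ I, HasDerivAt ψ
      (-((m : ℝ) + 1) * C * (φ s ^ (-((m : ℤ) + 2)) * deriv φ s)) s := by
    intro s hs
    have hx := (hpos s hs).ne'
    rw [hψ]
    refine (((hasDerivAt_zpow (-((m + 1 : ℕ) : ℤ)) (φ s) (Or.inl hx)).comp s
      (hd1 s hs)).const_mul C).congr_deriv ?_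
    rw [show (-((m + 1 : ℕ) : ℤ)) - 1 = -((m : ℤ) + 2) by push_cast; ring]
    push_cast
    ring
  intro s hs
  have hx := hpos s hs
  -- The weight is constant on `I`, so only the derivative of `ψ'` is left to compute.
  have hin : (fun t => (1 + (deriv φ t) ^ 2) ^ (-(1 / 2 : ℝ)) * (φ t) ^ (((m + 1 : ℕ) : ℤ) - 1)
        * deriv ψ t) =ᶠ[nhds s]
      fun t => φ₀ ^ m * (-((m : ℝ) + 1) * C * (φ t ^ (-((m : ℤ) + 2)) * deriv φ t)) := by
    filter_upwards [hIopen.mem_nhds hs] with t ht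
    have hxt := (hpos t ht).ne'
    rw [hroot t ht, (hψ1 t ht).deriv, show ((m + 1 : ℕ) : ℤ) - 1 = (m : ℤ) by push_cast; ring,
      zpow_natCast, div_mul_cancel₀ _ (pow_ne_zero _ hxt)]
  have hψ2 := (((((hasDerivAt_zpow (-((m : ℤ) + 2)) (φ s) (Or.inl hx.ne')).comp s
      (hd1 s hs)).mul (hd2 s hs)).const_mul (-((m : ℝ) + 1) * C)).const_mul (φ₀ ^ m)).deriv
  unfold radialLaplacian
  rw [hin.deriv_eq, hroot s hs,
    show deriv (fun t => φ₀ ^ m * (-((m : ℝ) + 1) * C * (φ t ^ (-((m : ℤ) + 2)) * deriv φ t))) s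
      = _ from hψ2, (hψ1 s hs).deriv]
  have hψs : ψ s = C * (φ s ^ m * φ s)⁻¹ := by
    rw [hψ]
    simp only [zpow_neg, zpow_natCast, pow_succ]
  have e1 : φ s ^ ((1 : ℤ) - ((m + 1 : ℕ) : ℤ)) = (φ s ^ m)⁻¹ := by
    rw [show (1 : ℤ) - ((m + 1 : ℕ) : ℤ) = -(m : ℤ) by push_cast; ring, zpow_neg, zpow_natCast]
  have e2 : φ s ^ (-((m : ℤ) + 2)) = (φ s ^ m * φ s ^ 2)⁻¹ := by
    rw [zpow_neg, zpow_add₀ hx.ne', zpow_natCast]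
    norm_cast
  have hfis := hfi s hs
  simp only [Function.comp]
  rw [zpow_sub_one₀ hx.ne', e1, e2, hψs]
  push_cast
  -- Eliminating `φ₀` and `C` through `(φ₀ᵐ)² = (φᵐ)²/(1+φ'²)` and the value of `C²`
  -- leaves a rational identity in `φ`, `φᵐ`, `φ'`, `m`.
  have hwpos : 0 < 1 + (deriv φ s) ^ 2 := by positivity
  have hX : 0 < φ s ^ m := by positivity
  have hm : (0 : ℝ) < (m : ℝ) + 1 := by positivity
  clear_value C
  generalize φ s ^ m = X at *
  generalize φ₀ ^ m = Y at *
  generalize φ s = x at *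
  generalize deriv φ s = p at *
  have hY : Y ^ 2 = X ^ 2 / (1 + p ^ 2) := by
    rw [eq_div_iff hwpos.ne']
    linarith
  rw [hY] at hC2
  generalize (m : ℝ) = k at *
  linear_combination (norm := skip)
    C ^ 2 * (-(k + 1) * (-(k + 2) * p ^ 2 + k * (1 + p ^ 2)) / (X ^ 4 * x ^ 4)) * hY
      + C ^ 2 / (X * x) ^ 4 * hC2
  field_simp
  ring
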